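/- Let G = (V,D) be a graph with no isolated vertices whose edge set D is a double (2-fold) R_2-circuit, let x, y, z be three distinct technicolour vertices of G, and let G*v be the cone of G over a new vertex v, so that E(G*v) is a double R_3-circuit. Then the edges vx, vy, vz do not all belong to the same part of the principal partition of E(G*v). -/

import Mathlib

open scoped BigOperators

/-- The row of the `d`-dimensional rigidity matrix of a realisation `p : V → ℝ^d`
indexed by the (unordered) edge `e`. -/
noncomputable def rigRow (d : ℕ) {V : Type*} [DecidableEq V]
    (p : V → Fin d → ℝ) (e : Sym2 V) : V × Fin d → ℝ :=
  Sym2.lift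
    ⟨fun u v wi =>
        (((if wi.1 = u then (1 : ℝ) else 0) - (if wi.1 = v then (1 : ℝ) else 0)) *
          (p u wi.2 - p v wi.2)),
      fun u v => by funext wi; ring⟩ e

/-- A realisation is generic if the coordinates of the points form an algebraically
independent set over `ℚ`. -/
def Generic (d : ℕ) {V : Type*} (p : V → Fin d → ℝ) : Prop :=
  AlgebraicIndependent ℚ fun vi : V × Fin d => p vi.1 vi.2

/-- `rrk d p F` : the rank of the set of rows of the rigidity matrix of `(K_V, p)`
indexed by the edges in `F`.  For generic `p` this is the rank function `r_d` of
the generic `d`-dimensional rigidity matroid. -/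
noncomputable def rrk (d : ℕ) {V : Type*} [Fintype V] [DecidableEq V]
    (p : V → Fin d → ℝ) (F : Set (Sym2 V)) : ℕ :=
  Module.finrank ℝ (Submodule.span ℝ (rigRow d p '' F))

/-- `D` is a `k`-fold circuit (with respect to the realisation `p`) :
`r (D \ {f}) = r D` for every `f ∈ D`, and `r D = |D| - k`. -/
def IsKFoldCircuit (d : ℕ) {V : Type*} [Fintype V] [DecidableEq V]
    (p : V → Fin d → ℝ) (D : Finset (Sym2 V)) (k : ℕ) : Prop :=
  (∀ f ∈ D, rrk d p (↑D \ {f}) = rrk d p ↑D) ∧ rrk d p ↑D + k = D.card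

/-- An `R_d`-circuit: `r C = |C| - 1` and `r (C \ {f}) = r C` for all `f ∈ C`. -/
def IsCircuit (d : ℕ) {V : Type*} [Fintype V] [DecidableEq V]
    (p : V → Fin d → ℝ) (C : Finset (Sym2 V)) : Prop :=
  IsKFoldCircuit d p C 1

/-- `A` is a part of the principal partition of the `k`-fold circuit `D`:
the parts are the sets `D \ B` where `B` runs over the `(k-1)`-fold circuits
contained in `D`. -/
def IsPrincipalPart (d : ℕ) {V : Type*} [Fintype V] [DecidableEq V]
    (p : V → Fin d → ℝ) (D : Finset (Sym2 V)) (k : ℕ) (A : Finset (Sym2 V)) : Prop :=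
  ∃ B ⊆ D, IsKFoldCircuit d p B (k - 1) ∧ A = D \ B

/-- Closure in the rigidity matroid: all edges of `K_V` whose addition to `F`
does not increase the rank. -/
def rcl (d : ℕ) {V : Type*} [Fintype V] [DecidableEq V]
    (p : V → Fin d → ℝ) (F : Set (Sym2 V)) : Set (Sym2 V) :=
  {e | ¬ e.IsDiag ∧ rrk d p (insert e F) = rrk d p F}

/-- A `k`-fold circuit `D` with principal partition `A_1, …, A_ℓ` is balanced if
`r_d (⋂ i, cl_d (D \ A_i)) = ℓ - k`. -/
def IsBalanced (d : ℕ) {V : Type*} [Fintype V] [DecidableEq V]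
    (p : V → Fin d → ℝ) (D : Finset (Sym2 V)) (k : ℕ) : Prop :=
  rrk d p (⋂ A ∈ {A | IsPrincipalPart d p D k A}, rcl d p ↑(D \ A)) + k =
    Set.ncard {A | IsPrincipalPart d p D k A}

/-- A vertex is monochromatic if all edges of `D` incident with it lie in a single
part of the principal partition (and technicolour otherwise). -/
def Monochromatic (d : ℕ) {V : Type*} [Fintype V] [DecidableEq V]
    (p : V → Fin d → ℝ) (D : Finset (Sym2 V)) (k : ℕ) (w : V) : Prop :=
  ∃ A, IsPrincipalPart d p D k A ∧ ∀ e ∈ D, w ∈ e → e ∈ A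

/-- The graph `(W, E)` is `R_d`-rigid: it is a complete graph on at most `d+1`
vertices, or `r_d(E) = d|W| - (d+1 choose 2)`. -/
def IsRigidOn (d : ℕ) {V : Type*} [Fintype V] [DecidableEq V]
    (p : V → Fin d → ℝ) (W : Finset V) (E : Finset (Sym2 V)) : Prop :=
  (W.card ≤ d + 1 ∧ ∀ u ∈ W, ∀ w ∈ W, u ≠ w → s(u, w) ∈ E) ∨
    (rrk d p ↑E : ℤ) + ((d + 1).choose 2 : ℤ) = (d : ℤ) * (W.card : ℤ)

/-- The edge set of the cone of (the graph with edge set) `D` over a new vertex,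
realised as `none : Option V`. -/
def coneEdges {V : Type*} [Fintype V] [DecidableEq V] (D : Finset (Sym2 V)) :
    Finset (Sym2 (Option V)) :=
  D.image (Sym2.map Option.some) ∪
    Finset.univ.image fun u : V => s((Option.some u : Option V), (none : Option V))

/-- The degree of the vertex `w` in the edge set `D`. -/
def degIn {V : Type*} [Fintype V] [DecidableEq V] (D : Finset (Sym2 V)) (w : V) : ℕ :=
  (D.filter fun e => w ∈ e).card

/-- The set of vertices incident with an edge of `F`. -/
def esupp {V : Type*} [Fintype V] [DecidableEq V] (F : Finset (Sym2 V)) : Finset V :=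
  Finset.univ.filter fun w => ∃ e ∈ F, w ∈ e


section Helpers

/-- `l` is an equilibrium stress supported on `D`. -/
def IsStress (d : ℕ) {V : Type*} [Fintype V] [DecidableEq V]
    (p : V → Fin d → ℝ) (D : Finset (Sym2 V)) (l : Sym2 V → ℝ) : Prop :=
  (∀ e, e ∉ D → l e = 0) ∧ ∑ e ∈ D, l e • rigRow d p e = 0

theorem sum_rigRow_apply {d : ℕ} {V : Type*} [Fintype V] [DecidableEq V]
    (p : V → Fin d → ℝ) (D : Finset (Sym2 V)) (l : Sym2 V → ℝ)
    (hl : ∀ e, e ∉ D → l e = 0) (u : V) (i : Fin d) :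
    (∑ e ∈ D, l e • rigRow d p e) (u, i) = ∑ v, l s(u, v) * (p u i - p v i) := by
  have h1 : (∑ e ∈ D, l e • rigRow d p e) = ∑ e, l e • rigRow d p e := by
    apply Finset.sum_subset (Finset.subset_univ _)
    intro e _ he
    rw [hl e he, zero_smul]
  rw [h1, Finset.sum_apply]
  have hinj : Function.Injective (fun v : V => s(u, v)) := by
    intro a b h
    exact Sym2.congr_right.1 h
  have h2 : ∑ v, l s(u, v) * (p u i - p v i)
      = ∑ v, (l s(u, v) • rigRow d p s(u, v)) (u, i) := by
    refine Finset.sum_congr rfl fun v _ => ?_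
    simp only [rigRow, Sym2.lift_mk, Pi.smul_apply, smul_eq_mul]
    by_cases h : u = v
    · subst h; simp
    · simp [h]
  rw [h2, ← Finset.sum_image (s := Finset.univ) (g := fun v : V => s(u, v))
    (f := fun e => (l e • rigRow d p e) (u, i)) (fun a _ b _ h => hinj h)]
  symm
  apply Finset.sum_subset (Finset.subset_univ _)
  intro e _ he
  induction e using Sym2.ind with
  | _ a b =>
    have ha : u ≠ a := by
      rintro rfl; apply he; simp
    have hb : u ≠ b := by
      rintro rfl; apply he; simp [Sym2.eq_swap]
    simp [rigRow, ha, hb]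

theorem isStress_iff {d : ℕ} {V : Type*} [Fintype V] [DecidableEq V]
    (p : V → Fin d → ℝ) (D : Finset (Sym2 V)) (l : Sym2 V → ℝ) :
    IsStress d p D l ↔ (∀ e, e ∉ D → l e = 0) ∧
      ∀ u i, ∑ v, l s(u, v) * (p u i - p v i) = 0 := by
  constructor
  · rintro ⟨h1, h2⟩
    refine ⟨h1, fun u i => ?_⟩
    rw [← sum_rigRow_apply p D l h1, h2]; rfl
  · rintro ⟨h1, h2⟩
    refine ⟨h1, ?_⟩
    funext ⟨u, i⟩
    rw [sum_rigRow_apply p D l h1, h2]; rfl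

theorem dep_iff_stress {d : ℕ} {V : Type*} [Fintype V] [DecidableEq V]
    (p : V → Fin d → ℝ) (D : Finset (Sym2 V)) :
    ¬ LinearIndepOn ℝ (rigRow d p) (D : Set (Sym2 V)) ↔ ∃ l, IsStress d p D l ∧ l ≠ 0 := by
  rw [linearIndepOn_finset_iff]
  push Not
  constructor
  · rintro ⟨f, hf, e, he, hfe⟩
    refine ⟨fun e => if e ∈ D then f e else 0, ⟨fun e he => by simp [he], ?_⟩, ?_⟩
    · rw [← hf]
      refine Finset.sum_congr rfl fun e he => by simp [he]
    · intro h
      have := congrFun h e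
      simp [he, hfe] at this
  · rintro ⟨l, ⟨h1, h2⟩, h3⟩
    refine ⟨l, h2, ?_⟩
    by_contra! h
    apply h3
    funext e
    by_cases he : e ∈ D
    · exact h e he
    · exact h1 e he

theorem indep_iff_rrk {d : ℕ} {V : Type*} [Fintype V] [DecidableEq V]
    (p : V → Fin d → ℝ) (D : Finset (Sym2 V)) :
    LinearIndepOn ℝ (rigRow d p) (D : Set (Sym2 V)) ↔ D.card ≤ rrk d p D := by
  unfold LinearIndepOn
  rw [linearIndependent_iff_card_le_finrank_span, rrk, Set.image_eq_range, Set.finrank]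
  simp

theorem rrk_le_card {d : ℕ} {V : Type*} [Fintype V] [DecidableEq V]
    (p : V → Fin d → ℝ) (D : Finset (Sym2 V)) : rrk d p D ≤ D.card := by
  have := finrank_range_le_card (R := ℝ) (fun e : (D : Set (Sym2 V)) => rigRow d p e)
  rw [Set.finrank, ← Set.image_eq_range] at this
  simpa [rrk] using this

theorem rrk_mono {d : ℕ} {V : Type*} [Fintype V] [DecidableEq V]
    (p : V → Fin d → ℝ) {F F' : Set (Sym2 V)} (h : F ⊆ F') : rrk d p F ≤ rrk d p F' :=
  Submodule.finrank_mono (Submodule.span_mono (Set.image_mono h))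

/-- A dependent set contains a circuit. -/
theorem exists_circuit {d : ℕ} {V : Type*} [Fintype V] [DecidableEq V]
    (p : V → Fin d → ℝ) (D : Finset (Sym2 V))
    (h : ¬ LinearIndepOn ℝ (rigRow d p) (D : Set (Sym2 V))) :
    ∃ B ⊆ D, IsKFoldCircuit d p B 1 := by
  classical
  induction D using Finset.strongInduction with
  | _ D ih =>
    by_cases hmin : ∃ f ∈ D, ¬ LinearIndepOn ℝ (rigRow d p) ((D.erase f : Finset (Sym2 V)) : Set (Sym2 V))
    · obtain ⟨f, hf, hdep⟩ := hmin
      obtain ⟨B, hB, hc⟩ := ih _ (Finset.erase_ssubset hf) hdep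
      exact ⟨B, hB.trans (Finset.erase_subset _ _), hc⟩
    · push Not at hmin
      have hlt : rrk d p D < D.card := by
        rw [indep_iff_rrk] at h; omega
      have hne : D.Nonempty := by
        rw [← Finset.card_pos]; omega
      have key : ∀ f ∈ D, D.card - 1 ≤ rrk d p (↑D \ {f}) := by
        intro f hf
        have := (indep_iff_rrk p _).1 (hmin f hf)
        rwa [Finset.card_erase_of_mem hf, Finset.coe_erase] at this
      have hle : ∀ f, rrk d p (↑D \ {f}) ≤ rrk d p D := fun f => rrk_mono p Set.sdiff_subset
      refine ⟨D, subset_rfl, fun f hf => ?_, ?_⟩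
      · have := key f hf; have := hle f; omega
      · obtain ⟨f, hf⟩ := hne
        have := key f hf; have := hle f; omega

theorem exists_stress_ne {d : ℕ} {V : Type*} [Fintype V] [DecidableEq V]
    (p : V → Fin d → ℝ) (D : Finset (Sym2 V)) (f : Sym2 V) (hf : f ∈ D)
    (h : rrk d p (↑D \ {f}) = rrk d p ↑D) : ∃ l, IsStress d p D l ∧ l f ≠ 0 := by
  classical
  have hs := Submodule.eq_of_le_of_finrank_eq
    (Submodule.span_mono (R := ℝ) (Set.image_mono (f := rigRow d p)
      (Set.sdiff_subset (s := (D : Set (Sym2 V))) (t := {f})))) h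
  have hm : rigRow d p f ∈ Submodule.span ℝ (rigRow d p '' ((D.erase f : Finset _) : Set (Sym2 V))) := by
    rw [Finset.coe_erase, hs]
    exact Submodule.subset_span ⟨f, hf, rfl⟩
  obtain ⟨c, hc⟩ := (Submodule.mem_span_image_finset_iff_exists_fun ℝ).1 hm
  refine ⟨fun e => if h : e ∈ D.erase f then c ⟨e, h⟩ else if e = f then -1 else 0, ⟨?_, ?_⟩, by simp⟩
  · intro e he
    have : e ≠ f := by rintro rfl; exact he hf
    simp [he, this]
  · rw [← Finset.add_sum_erase _ _ hf, ← Finset.sum_coe_sort (D.erase f)]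
    rw [Finset.sum_congr rfl (g := fun i : D.erase f => c i • rigRow d p i), hc]
    · simp
    · rintro ⟨e, he⟩ _
      simp only [he, dif_pos]

theorem exists_basis {d : ℕ} {V : Type*} [Fintype V] [DecidableEq V]
    (p : V → Fin d → ℝ) (D : Finset (Sym2 V)) (h : rrk d p ↑D + 2 = D.card) :
    ∃ α β, IsStress d p D α ∧ IsStress d p D β ∧
      (∀ a b : ℝ, a • α + b • β = 0 → a = 0 ∧ b = 0) ∧
      (∀ l, IsStress d p D l → ∃ a b : ℝ, l = a • α + b • β) := by
  classical
  let f := Fintype.linearCombination ℝ (fun e : D => rigRow d p e)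
  have hr := LinearMap.finrank_range_add_finrank_ker f
  have hk : Module.finrank ℝ f.ker = 2 := by
    rw [Fintype.range_linearCombination] at hr
    have : Module.finrank ℝ (Submodule.span ℝ (Set.range fun e : D => rigRow d p e)) = rrk d p ↑D := by
      rw [rrk, Set.image_eq_range]; rfl
    rw [this] at hr
    simp at hr
    omega
  let b := Module.finBasisOfFinrankEq ℝ f.ker hk
  let ext : (D → ℝ) → Sym2 V → ℝ := fun g e => if h : e ∈ D then g ⟨e, h⟩ else 0
  have hext : ∀ g ∈ f.ker, IsStress d p D (ext g) := by
    intro g hg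
    refine ⟨fun e he => by simp [ext, he], ?_⟩
    rw [LinearMap.mem_ker] at hg
    rw [← hg, ← Finset.sum_coe_sort D]
    simp only [f, Fintype.linearCombination_apply]
    refine Finset.sum_congr rfl ?_
    rintro ⟨e, he⟩ _
    simp [ext, he]
  refine ⟨ext (b 0), ext (b 1), hext _ (b 0).2, hext _ (b 1).2, ?_, ?_⟩
  · intro s t hst
    have : s • b 0 + t • b 1 = 0 := by
      apply Subtype.ext
      funext ⟨e, he⟩
      have := congrFun hst e
      simpa [ext, he] using this
    have hli := Fintype.linearIndependent_iff.1 b.linearIndependent ![s, t] (by simpa using this)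
    exact ⟨hli 0, hli 1⟩
  · rintro l ⟨hl1, hl2⟩
    have hm : (fun e : D => l e) ∈ f.ker := by
      rw [LinearMap.mem_ker, ← hl2, ← Finset.sum_coe_sort D]
      simp [f, Fintype.linearCombination_apply]
    have hs := b.sum_repr ⟨_, hm⟩
    rw [Fin.sum_univ_two] at hs
    refine ⟨b.repr ⟨_, hm⟩ 0, b.repr ⟨_, hm⟩ 1, ?_⟩
    funext e
    by_cases he : e ∈ D
    · have := congrFun (congrArg Subtype.val hs) ⟨e, he⟩
      simp only [Submodule.coe_add, Submodule.coe_smul, Pi.add_apply, Pi.smul_apply] at this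
      simp only [ext, he, dif_pos, Pi.add_apply, Pi.smul_apply]
      exact this.symm
    · simp [ext, he, hl1]

/-- Generic polynomial row. -/
noncomputable def rigRowPoly (d : ℕ) {V : Type*} [DecidableEq V] (e : Sym2 V) :
    V × Fin d → MvPolynomial (V × Fin d) ℚ :=
  Sym2.lift
    ⟨fun u v wi =>
        (((if wi.1 = u then 1 else 0) - (if wi.1 = v then 1 else 0)) *
          (MvPolynomial.X (u, wi.2) - MvPolynomial.X (v, wi.2))),
      fun u v => by funext wi; ring⟩ e

theorem aeval_rigRowPoly {d : ℕ} {V : Type*} [DecidableEq V] (p : V → Fin d → ℝ)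
    (e : Sym2 V) (wi : V × Fin d) :
    MvPolynomial.aeval (fun vi : V × Fin d => p vi.1 vi.2) (rigRowPoly d e wi) = rigRow d p e wi := by
  induction e using Sym2.ind with
  | _ a b =>
    simp only [rigRowPoly, rigRow, Sym2.lift_mk, map_mul, map_sub, MvPolynomial.aeval_X]
    congr 2 <;> split_ifs <;> simp

theorem generic_aeval_ne {d : ℕ} {V : Type*} {p : V → Fin d → ℝ} (hp : Generic d p)
    (f : MvPolynomial (V × Fin d) ℚ) (q : V → Fin d → ℝ)
    (h : MvPolynomial.aeval (fun vi : V × Fin d => q vi.1 vi.2) f ≠ 0) :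
    MvPolynomial.aeval (fun vi : V × Fin d => p vi.1 vi.2) f ≠ 0 := by
  intro h0
  have : f = 0 := (injective_iff_map_eq_zero _).1 hp f h0
  rw [this] at h
  simp at h

theorem indep_iff_det {d : ℕ} {V : Type*} [Fintype V] [DecidableEq V]
    (p : V → Fin d → ℝ) (D : Finset (Sym2 V)) :
    LinearIndepOn ℝ (rigRow d p) (D : Set (Sym2 V)) ↔
      ((Matrix.of fun e : D => rigRow d p e) *
        (Matrix.of fun e : D => rigRow d p e).transpose).det ≠ 0 := by
  rw [Ne, ← Matrix.exists_vecMul_eq_zero_iff]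
  have := Matrix.vecMul_self_mul_conjTranspose_eq_zero (Matrix.of fun e : D => rigRow d p e)
  simp only [Matrix.conjTranspose_eq_transpose_of_trivial] at this
  simp only [this]
  unfold LinearIndepOn
  rw [Fintype.linearIndependent_iff]
  push Not
  have hv : ∀ v : D → ℝ, Matrix.vecMul v (Matrix.of fun e : D => rigRow d p e) =
      ∑ e, v e • rigRow d p e := by
    intro v
    funext wi
    simp [Matrix.vecMul, dotProduct]
  simp only [hv]
  constructor
  · intro h v hv0 h0
    exact hv0 (funext fun e => h v h0 e)
  · intro h v h0 e
    by_contra hne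
    exact h v (fun h => hne (congrFun h e)) h0

theorem indep_transfer {d : ℕ} {V : Type*} [Fintype V] [DecidableEq V]
    {p : V → Fin d → ℝ} (hp : Generic d p) (q : V → Fin d → ℝ) (D : Finset (Sym2 V))
    (h : LinearIndepOn ℝ (rigRow d q) (D : Set (Sym2 V))) :
    LinearIndepOn ℝ (rigRow d p) (D : Set (Sym2 V)) := by
  rw [indep_iff_det] at h ⊢
  let M : Matrix D (V × Fin d) (MvPolynomial (V × Fin d) ℚ) := Matrix.of fun e : D => rigRowPoly d e.1
  have key : ∀ r : V → Fin d → ℝ,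
      MvPolynomial.aeval (fun vi : V × Fin d => r vi.1 vi.2) ((M * M.transpose).det) =
      ((Matrix.of fun e : D => rigRow d r e) *
        (Matrix.of fun e : D => rigRow d r e).transpose).det := by
    intro r
    rw [← AlgHom.coe_toRingHom, RingHom.map_det]
    congr 1
    ext i j
    simp [M, Matrix.mul_apply, aeval_rigRowPoly]
  rw [← key] at h ⊢
  exact generic_aeval_ne hp _ q h

theorem cross_ne {V : Type*} {p : V → Fin 2 → ℝ} (hp : Generic 2 p) {a b c : V}
    (hab : a ≠ b) (hac : a ≠ c) (hbc : b ≠ c) :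
    (p b 0 - p a 0) * (p c 1 - p a 1) - (p b 1 - p a 1) * (p c 0 - p a 0) ≠ 0 := by
  classical
  have := generic_aeval_ne hp
    ((MvPolynomial.X (b, 0) - MvPolynomial.X (a, 0)) * (MvPolynomial.X (c, 1) - MvPolynomial.X (a, 1)) -
      (MvPolynomial.X (b, 1) - MvPolynomial.X (a, 1)) * (MvPolynomial.X (c, 0) - MvPolynomial.X (a, 0)))
    (fun v => if v = b then ![1, 0] else if v = c then ![0, 1] else 0)
    (by simp [hab, hac, hbc.symm])
  simpa using this

theorem point_ne {V : Type*} {p : V → Fin 2 → ℝ} (hp : Generic 2 p) {a b : V}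
    (hab : a ≠ b) : p a 0 ≠ p b 0 := by
  intro h
  exact hab (by simpa using hp.injective (a₁ := (a, 0)) (a₂ := (b, 0)) h)

/-- The realisation of the cone with apex at the origin. -/
noncomputable def coneReal {V : Type*} (p : V → Fin 2 → ℝ) (s : V → ℝ) : Option V → Fin 3 → ℝ :=
  fun o => o.elim 0 (fun u => ![p u 0 / s u, p u 1 / s u, 1 / s u])

theorem cone_stress {V : Type*} [Fintype V] [DecidableEq V]
    (p : V → Fin 2 → ℝ) (D : Finset (Sym2 V)) (B : Finset (Sym2 (Option V)))
    (hB : B ⊆ coneEdges D) (s : V → ℝ) (hs : ∀ u, s u ≠ 0)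
    (ω : Sym2 (Option V) → ℝ) (hω : IsStress 3 (coneReal p s) B ω) (hne : ω ≠ 0) :
    ∃ l, IsStress 2 p D l ∧ l ≠ 0 ∧
      ∀ u, s(some u, none) ∉ B → ∑ w, l s(u, w) * (s u - s w) = 0 := by
  rw [isStress_iff] at hω
  obtain ⟨hsupp, heq⟩ := hω
  let l : Sym2 V → ℝ := Sym2.lift ⟨fun u w => ω s(some u, some w) / (s u * s w), fun u w => by
    simp only [Sym2.eq_swap (a := some u), mul_comm (s u)]⟩
  have hl : ∀ u w, l s(u, w) = ω s(some u, some w) / (s u * s w) := fun u w => rfl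
  have h2 : ∀ u, ω s(some u, none) / s u + ∑ w, ω s(some u, some w) * (1 / s u - 1 / s w) = 0 := by
    intro u
    have := heq (some u) 2
    rw [Fintype.sum_option] at this
    simpa [coneReal, div_eq_mul_inv] using this
  have h01 : ∀ u (i : Fin 2), ω s(some u, none) * (p u i / s u) +
      ∑ w, ω s(some u, some w) * (p u i / s u - p w i / s w) = 0 := by
    intro u i
    have := heq (some u) i.castSucc
    rw [Fintype.sum_option] at this
    fin_cases i <;> simpa [coneReal] using this
  have hL : ∀ u, ∑ w, l s(u, w) * (s u - s w) = ω s(some u, none) / s u := by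
    intro u
    rw [eq_neg_of_add_eq_zero_left (h2 u), ← Finset.sum_neg_distrib]
    refine Finset.sum_congr rfl fun w _ => ?_
    rw [hl]
    have := hs u
    have := hs w
    field_simp
    ring
  refine ⟨l, ?_, ?_, ?_⟩
  · rw [isStress_iff]
    constructor
    · intro e he
      induction e using Sym2.ind with
      | _ a b =>
        rw [hl, hsupp, zero_div]
        intro hm
        have := hB hm
        simp only [coneEdges, Finset.mem_union, Finset.mem_image, Finset.mem_univ, true_and] at this
        rcases this with ⟨e', he', h⟩ | ⟨u, h⟩
        · have h' : Sym2.map some e' = Sym2.map some s(a, b) := by simpa using h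
          rw [Sym2.map.injective (Option.some_injective V) h'] at he'
          exact he he'
        · simp at h
    · intro u i
      have e1 := h2 u
      have e2 := h01 u i
      have : ∑ w, l s(u, w) * (p u i - p w i) =
        (1 / s u) * ((ω s(some u, none) * (p u i / s u) +
          ∑ w, ω s(some u, some w) * (p u i / s u - p w i / s w)) - p u i *
         (ω s(some u, none) / s u + ∑ w, ω s(some u, some w) * (1 / s u - 1 / s w))) := by
        rw [mul_add, add_sub_add_comm, Finset.mul_sum, ← Finset.sum_sub_distrib]
        have h0 : ω s(some u, none) * (p u i / s u) - p u i * (ω s(some u, none) / s u) = 0 := by ring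
        rw [h0, zero_add, Finset.mul_sum]
        refine Finset.sum_congr rfl fun w _ => ?_
        rw [hl]
        have := hs u
        have := hs w
        field_simp
        ring
      rw [this, e1, e2]; simp
  · intro h0
    apply hne
    have hss : ∀ u w, ω s(some u, some w) = 0 := by
      intro u w
      have := congrFun h0 s(u, w)
      rw [hl] at this
      simpa [hs] using this
    have hsn : ∀ u, ω s(some u, none) = 0 := by
      intro u
      have := h2 u
      simpa [hss, hs] using this
    funext e
    induction e using Sym2.ind with
    | _ a b =>
      rcases a with _ | a <;> rcases b with _ | b
      · apply hsupp
        intro hm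
        have := hB hm
        simp only [coneEdges, Finset.mem_union, Finset.mem_image, Finset.mem_univ, true_and] at this
        rcases this with ⟨e', he', h⟩ | ⟨u, h⟩
        · induction e' using Sym2.ind with
          | _ a b => simp at h
        · simp at h
      · rw [Sym2.eq_swap]; exact hsn b
      · exact hsn a
      · exact hss a b
  · intro u hu
    rw [hL, hsupp _ hu, zero_div]

theorem bilinear_prop {E : Type*} [AddCommGroup E] [Module ℝ E] (a1 a2 b1 b2 : E →ₗ[ℝ] ℝ)
    (h : ∀ s, a1 s * b2 s = a2 s * b1 s)
    (hli : ∀ a b : ℝ, (∀ s, a * a1 s + b * a2 s = 0) → a = 0 ∧ b = 0) :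
    ∃ c : ℝ, ∀ s, b1 s = c * a1 s ∧ b2 s = c * a2 s := by
  obtain ⟨e0, he0⟩ : ∃ e, a1 e ≠ 0 := by
    by_contra! hc
    have := (hli 1 0 (by simp [hc])).1
    norm_num at this
  obtain ⟨e1, he1⟩ : ∃ e, a1 e = 1 := ⟨(a1 e0)⁻¹ • e0, by simp [he0]⟩
  obtain ⟨v, hv⟩ : ∃ v, -a2 e1 * a1 v + 1 * a2 v ≠ 0 := by
    by_contra! hc
    have := (hli _ _ hc).2
    norm_num at this
  obtain ⟨e, hea, heb⟩ : ∃ e, a1 e = 0 ∧ a2 e ≠ 0 := by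
    refine ⟨v - a1 v • e1, by simp [he1], ?_⟩
    intro h0
    apply hv
    simp at h0
    linarith
  have hbe : b1 e = 0 := by
    have := h e
    rw [hea] at this
    simpa [heb] using this.symm
  have hker : ∀ v, a1 v = 0 → b1 v = 0 := by
    intro v hv
    have t0 := h v
    have t1 := h (v + e)
    simp only [map_add, hv, hea, hbe] at t0 t1
    have : a2 e * b1 v = 0 := by linarith
    simpa [heb] using this
  have hb1 : ∀ s, b1 s = b1 e1 * a1 s := by
    intro s
    have := hker (s - a1 s • e1) (by simp [he1])
    simp at this
    linarith
  have hb2 : ∀ s, a1 s ≠ 0 → b2 s = b1 e1 * a2 s := by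
    intro s hs
    have := h s
    rw [hb1 s] at this
    apply mul_left_cancel₀ hs
    rw [this]; ring
  refine ⟨b1 e1, fun s => ⟨hb1 s, ?_⟩⟩
  by_cases hs : a1 s = 0
  · have t1 := hb2 (s + e1) (by simp [hs, he1])
    have t2 := hb2 e1 (by simp [he1])
    simp only [map_add] at t1
    linarith
  · exact hb2 s hs

/-- The functional `s ↦ ∑ w, l(uw) (s u - s w)`. -/
noncomputable def lapForm {V : Type*} [Fintype V] (l : Sym2 V → ℝ) (u : V) : (V → ℝ) →ₗ[ℝ] ℝ where
  toFun s := ∑ w, l s(u, w) * (s u - s w)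
  map_add' s t := by
    rw [← Finset.sum_add_distrib]
    refine Finset.sum_congr rfl fun w _ => ?_
    simp only [Pi.add_apply]; ring
  map_smul' a s := by
    rw [RingHom.id_apply, smul_eq_mul, Finset.mul_sum]
    refine Finset.sum_congr rfl fun w _ => ?_
    simp only [Pi.smul_apply, smul_eq_mul]; ring

theorem lapForm_apply {V : Type*} [Fintype V] (l : Sym2 V → ℝ) (u : V) (s : V → ℝ) :
    lapForm l u s = ∑ w, l s(u, w) * (s u - s w) := rfl

theorem lapForm_comb {V : Type*} [Fintype V] (α β : Sym2 V → ℝ) (a b : ℝ) (u : V) (s : V → ℝ) :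
    lapForm (a • α + b • β) u s = a * lapForm α u s + b * lapForm β u s := by
  simp only [lapForm_apply, Finset.mul_sum, ← Finset.sum_add_distrib]
  refine Finset.sum_congr rfl fun w _ => ?_
  simp only [Pi.add_apply, Pi.smul_apply, smul_eq_mul]; ring

theorem lapForm_single {V : Type*} [Fintype V] [DecidableEq V] (l : Sym2 V → ℝ) (u w : V)
    (h : w ≠ u) : lapForm l u (Pi.single w 1) = - l s(u, w) := by
  rw [lapForm_apply, Finset.sum_eq_single w]
  · simp [h.symm]
  · intro b _ hb
    simp [h.symm, hb]
  · simp

theorem prop_rows {V : Type*} [Fintype V] [DecidableEq V]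
    (p : V → Fin 2 → ℝ) (D : Finset (Sym2 V)) (hsimple : ∀ e ∈ D, ¬ e.IsDiag)
    (α β : Sym2 V → ℝ)
    (hli : ∀ a b : ℝ, a • α + b • β = 0 → a = 0 ∧ b = 0)
    (hspan : ∀ l, IsStress 2 p D l → ∃ a b : ℝ, l = a • α + b • β)
    (hcomb : ∀ a b : ℝ, IsStress 2 p D (a • α + b • β)) (x y : V)
    (hx : ∀ l, IsStress 2 p D l → (∀ w, l s(x, w) = 0) → l = 0)
    (h : ∀ s : V → ℝ, ∃ l, IsStress 2 p D l ∧ l ≠ 0 ∧ lapForm l x s = 0 ∧ lapForm l y s = 0) :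
    ∃ c : ℝ, ∀ l, IsStress 2 p D l → ∀ w, w ≠ x → w ≠ y → l s(y, w) = c * l s(x, w) := by
  obtain ⟨c, hc⟩ := bilinear_prop (lapForm α x) (lapForm β x) (lapForm α y) (lapForm β y)
    (by
      intro s
      obtain ⟨l, hl, hne, h1, h2⟩ := h s
      obtain ⟨a, b, rfl⟩ := hspan l hl
      rw [lapForm_comb] at h1 h2
      by_cases ha : a = 0
      · have hb : b ≠ 0 := by
          rintro rfl; apply hne; simp [ha]
        have e1 : lapForm β x s = 0 := by simpa [ha, hb] using h1
        have e2 : lapForm β y s = 0 := by simpa [ha, hb] using h2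
        rw [e1, e2]; ring
      · apply mul_left_cancel₀ ha
        linear_combination (lapForm β y s) * h1 - (lapForm β x s) * h2)
    (by
      intro a b hab
      apply hli
      apply hx _ (hcomb a b)
      intro w
      by_cases hw : w = x
      · subst hw
        apply (hcomb a b).1
        intro hm
        exact hsimple _ hm rfl
      · have := hab (Pi.single w 1)
        rw [← lapForm_comb, lapForm_single _ _ _ hw] at this
        linarith)
  refine ⟨c, fun l hl w hwx hwy => ?_⟩
  obtain ⟨a, b, rfl⟩ := hspan l hl
  have h1 : lapForm (a • α + b • β) y (Pi.single w 1) = c * lapForm (a • α + b • β) x (Pi.single w 1) := by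
    rw [lapForm_comb, lapForm_comb, (hc _).1, (hc _).2]; ring
  rw [lapForm_single _ _ _ hwx, lapForm_single _ _ _ hwy] at h1
  linarith

theorem isStress_comb {d : ℕ} {V : Type*} [Fintype V] [DecidableEq V]
    (p : V → Fin d → ℝ) (D : Finset (Sym2 V)) (α β : Sym2 V → ℝ)
    (hα : IsStress d p D α) (hβ : IsStress d p D β) (a b : ℝ) :
    IsStress d p D (a • α + b • β) := by
  refine ⟨fun e he => by simp [hα.1 e he, hβ.1 e he], ?_⟩
  have : ∑ e ∈ D, (a • α + b • β) e • rigRow d p e =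
      a • ∑ e ∈ D, α e • rigRow d p e + b • ∑ e ∈ D, β e • rigRow d p e := by
    rw [Finset.smul_sum, Finset.smul_sum, ← Finset.sum_add_distrib]
    refine Finset.sum_congr rfl fun e _ => ?_
    simp only [Pi.add_apply, Pi.smul_apply, smul_eq_mul, add_smul, mul_smul]
  rw [this, hα.2, hβ.2]; simp

theorem stress_star_injective {V : Type*} [Fintype V] [DecidableEq V]
    (p : V → Fin 2 → ℝ) (D : Finset (Sym2 V)) (x : V) (htx : ¬ Monochromatic 2 p D 2 x)
    (l : Sym2 V → ℝ) (hl : IsStress 2 p D l) (h : ∀ w, l s(x, w) = 0) : l = 0 := by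
  classical
  by_contra hne
  apply htx
  have hdep : ¬ LinearIndepOn ℝ (rigRow 2 p) ((D.filter fun e => l e ≠ 0 : Finset _) : Set (Sym2 V)) := by
    rw [dep_iff_stress]
    refine ⟨l, ⟨?_, ?_⟩, hne⟩
    · intro e he
      by_contra h0
      apply he
      rw [Finset.mem_filter]
      refine ⟨?_, h0⟩
      by_contra hD
      exact h0 (hl.1 e hD)
    · rw [← hl.2]
      apply Finset.sum_subset (Finset.filter_subset _ _)
      intro e he hne
      have : l e = 0 := by
        by_contra h0
        exact hne (Finset.mem_filter.2 ⟨he, h0⟩)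
      rw [this, zero_smul]
  obtain ⟨B, hB, hc⟩ := exists_circuit p _ hdep
  refine ⟨D \ B, ⟨B, hB.trans (Finset.filter_subset _ _), hc, rfl⟩, ?_⟩
  intro e he hxe
  rw [Finset.mem_sdiff]
  refine ⟨he, fun heB => ?_⟩
  obtain ⟨w, rfl⟩ := Sym2.mem_iff_exists.1 hxe
  exact (Finset.mem_filter.1 (hB heB)).2 (h w)

theorem exists_bary {V : Type*} {p : V → Fin 2 → ℝ} (hp : Generic 2 p) {x y z : V}
    (hxy : x ≠ y) (hxz : x ≠ z) (hyz : y ≠ z) :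
    ∃ bx bY bz : V → ℝ, (∀ w, bx w + bY w + bz w = 1) ∧
      ∀ w i, p w i = bx w * p x i + bY w * p y i + bz w * p z i := by
  have hΔ := cross_ne hp hxy hxz hyz
  set Δ := (p y 0 - p x 0) * (p z 1 - p x 1) - (p y 1 - p x 1) * (p z 0 - p x 0) with hΔdef
  let Y : V → ℝ := fun w => ((p w 0 - p x 0) * (p z 1 - p x 1) - (p w 1 - p x 1) * (p z 0 - p x 0)) / Δ
  let Z : V → ℝ := fun w => ((p y 0 - p x 0) * (p w 1 - p x 1) - (p y 1 - p x 1) * (p w 0 - p x 0)) / Δ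
  have hY : ∀ w, Y w * Δ = ((p w 0 - p x 0) * (p z 1 - p x 1) - (p w 1 - p x 1) * (p z 0 - p x 0)) :=
    fun w => div_mul_cancel₀ _ hΔ
  have hZ : ∀ w, Z w * Δ = ((p y 0 - p x 0) * (p w 1 - p x 1) - (p y 1 - p x 1) * (p w 0 - p x 0)) :=
    fun w => div_mul_cancel₀ _ hΔ
  refine ⟨fun w => 1 - Y w - Z w, Y, Z, fun w => by ring, fun w i => ?_⟩
  apply mul_right_cancel₀ hΔ
  have e1 := hY w
  have e2 := hZ w
  have key : p w i * Δ - ((1 - Y w - Z w) * p x i + Y w * p y i + Z w * p z i) * Δ =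
      (p w i - p x i) * Δ - (Y w * Δ) * (p y i - p x i) - (Z w * Δ) * (p z i - p x i) := by ring
  rw [← sub_eq_zero, key, e1, e2, hΔdef]
  fin_cases i <;> simp <;> ring

theorem bary_stress {V : Type*} [Fintype V] [DecidableEq V]
    (p : V → Fin 2 → ℝ) (D : Finset (Sym2 V)) (x y z : V)
    (hxy : x ≠ y) (hxz : x ≠ z) (hyz : y ≠ z) (bx bY bz : V → ℝ)
    (hb1 : ∀ w, bx w + bY w + bz w = 1)
    (hb2 : ∀ w i, p w i = bx w * p x i + bY w * p y i + bz w * p z i)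
    (N : Finset V) (hN : ∀ w ∈ N, w ≠ x ∧ w ≠ y ∧ w ≠ z)
    (hND : ∀ w ∈ N, s(x, w) ∈ D ∧ s(y, w) ∈ D ∧ s(z, w) ∈ D) (τ : V → ℝ)
    (h1 : s(x, y) ∈ D ∨ ∑ w ∈ N, τ w * (bx w * bY w) = 0)
    (h2 : s(x, z) ∈ D ∨ ∑ w ∈ N, τ w * (bx w * bz w) = 0)
    (h3 : s(y, z) ∈ D ∨ ∑ w ∈ N, τ w * (bY w * bz w) = 0) :
    ∃ l, IsStress 2 p D l ∧ ∀ w ∈ N, l s(x, w) = τ w * bx w ∧ l s(y, w) = τ w * bY w ∧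
      l s(z, w) = τ w * bz w := by
  let g : V → V → ℝ := fun w v => (if v = w then 1 else 0) - (if v = x then bx w else 0) -
    (if v = y then bY w else 0) - (if v = z then bz w else 0)
  have hg1 : ∀ w, ∑ v, g w v = 0 := by
    intro w
    simp only [g, Finset.sum_sub_distrib, Finset.sum_ite_eq', Finset.mem_univ, if_true]
    linarith [hb1 w]
  have hg2 : ∀ w i, ∑ v, g w v * p v i = 0 := by
    intro w i
    simp only [g, sub_mul, ite_mul, zero_mul, one_mul, Finset.sum_sub_distrib, Finset.sum_ite_eq',
      Finset.mem_univ, if_true]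
    linarith [hb2 w i]
  let l : Sym2 V → ℝ := Sym2.lift ⟨fun u v => if u = v then 0 else -∑ w ∈ N, τ w * (g w u * g w v), by
    intro u v
    simp only [eq_comm (a := u), mul_comm (g _ u)]⟩
  have hl : ∀ u v, l s(u, v) = if u = v then 0 else -∑ w ∈ N, τ w * (g w u * g w v) := fun _ _ => rfl
  clear_value l
  have hgx : ∀ w ∈ N, g w x = - bx w := by
    intro w hw
    obtain ⟨a, b, c⟩ := hN w hw
    simp [g, a.symm, hxy, hxz]
  have hgy : ∀ w ∈ N, g w y = - bY w := by
    intro w hw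
    obtain ⟨a, b, c⟩ := hN w hw
    simp [g, b.symm, hxy.symm, hyz]
  have hgz : ∀ w ∈ N, g w z = - bz w := by
    intro w hw
    obtain ⟨a, b, c⟩ := hN w hw
    simp [g, c.symm, hxz.symm, hyz.symm]
  have hgo : ∀ w v, v ≠ x → v ≠ y → v ≠ z → g w v = if v = w then 1 else 0 := by
    intro w v a b c
    simp [g, a, b, c]
  -- value on edges `uv` with `v` outside the triangle
  have hval : ∀ u v, u ≠ v → v ≠ x → v ≠ y → v ≠ z →
      l s(u, v) = if v ∈ N then - (τ v * g v u) else 0 := by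
    intro u v huv a b c
    rw [hl, if_neg huv]
    simp only [hgo _ v a b c, mul_ite, mul_one, mul_zero, Finset.sum_ite_eq]
    split_ifs <;> simp
  have hxyv : l s(x, y) = - ∑ w ∈ N, τ w * (bx w * bY w) := by
    rw [hl, if_neg hxy]
    congr 1
    refine Finset.sum_congr rfl fun w hw => ?_
    rw [hgx w hw, hgy w hw]; ring
  have hxzv : l s(x, z) = - ∑ w ∈ N, τ w * (bx w * bz w) := by
    rw [hl, if_neg hxz]
    congr 1
    refine Finset.sum_congr rfl fun w hw => ?_
    rw [hgx w hw, hgz w hw]; ring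
  have hyzv : l s(y, z) = - ∑ w ∈ N, τ w * (bY w * bz w) := by
    rw [hl, if_neg hyz]
    congr 1
    refine Finset.sum_congr rfl fun w hw => ?_
    rw [hgy w hw, hgz w hw]; ring
  have hxy0 : s(x, y) ∉ D → l s(x, y) = 0 := by
    intro h; rw [hxyv, h1.resolve_left h, neg_zero]
  have hxz0 : s(x, z) ∉ D → l s(x, z) = 0 := by
    intro h; rw [hxzv, h2.resolve_left h, neg_zero]
  have hyz0 : s(y, z) ∉ D → l s(y, z) = 0 := by
    intro h; rw [hyzv, h3.resolve_left h, neg_zero]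
  have hout : ∀ u v, u ≠ v → v ≠ x → v ≠ y → v ≠ z → s(u, v) ∉ D → l s(u, v) = 0 := by
    intro u v huv a b c hD
    rw [hval u v huv a b c]
    split_ifs with hv
    · obtain ⟨q1, q2, q3⟩ := hND v hv
      have : g v u = 0 := by
        rw [hgo v u, if_neg huv]
        · rintro rfl; exact hD q1
        · rintro rfl; exact hD q2
        · rintro rfl; exact hD q3
      rw [this]; simp
    · rfl
  refine ⟨l, ?_, ?_⟩
  · rw [isStress_iff]
    constructor
    · intro e he
      induction e using Sym2.ind with
      | _ u v =>
        by_cases huv : u = v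
        · rw [hl, if_pos huv]
        by_cases hv : ¬ v = x ∧ ¬ v = y ∧ ¬ v = z
        · exact hout u v huv hv.1 hv.2.1 hv.2.2 he
        by_cases hu : ¬ u = x ∧ ¬ u = y ∧ ¬ u = z
        · rw [Sym2.eq_swap] at he ⊢
          exact hout v u (Ne.symm huv) hu.1 hu.2.1 hu.2.2 he
        simp only [not_and_or, not_not] at hv hu
        have hv' := hv
        have hu' := hu
        clear hv hu
        rcases hv' with rfl | rfl | rfl <;> rcases hu' with rfl | rfl | rfl <;>
          first
          | exact absurd rfl huv
          | exact hxy0 he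
          | exact hxz0 he
          | exact hyz0 he
          | (rw [Sym2.eq_swap] at he ⊢
             first
             | exact hxy0 he
             | exact hxz0 he
             | exact hyz0 he)
    · intro u i
      have : ∀ v, l s(u, v) * (p u i - p v i) =
          ∑ w ∈ N, (τ w * g w u) * (g w v * p v i - p u i * g w v) := by
        intro v
        rw [hl]
        split_ifs with h
        · subst h
          rw [zero_mul]
          symm
          apply Finset.sum_eq_zero
          intros; ring
        · rw [neg_mul, Finset.sum_mul, ← Finset.sum_neg_distrib]
          refine Finset.sum_congr rfl fun w _ => ?_
          ring
      simp only [this]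
      rw [Finset.sum_comm]
      apply Finset.sum_eq_zero
      intro w _
      rw [← Finset.mul_sum, Finset.sum_sub_distrib, hg2, ← Finset.mul_sum, hg1]
      ring
  · intro w hw
    obtain ⟨a, b, c⟩ := hN w hw
    rw [hval x w a.symm a b c, hval y w b.symm a b c, hval z w c.symm a b c, if_pos hw, if_pos hw,
      if_pos hw, hgx w hw, hgy w hw, hgz w hw]
    refine ⟨by ring, by ring, by ring⟩

theorem degree_ge {V : Type*} [Fintype V] [DecidableEq V]
    (p : V → Fin 2 → ℝ) (hp : Generic 2 p) (D : Finset (Sym2 V))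
    (hsimple : ∀ e ∈ D, ¬ e.IsDiag) (x : V) (α β : Sym2 V → ℝ)
    (hli : ∀ a b : ℝ, a • α + b • β = 0 → a = 0 ∧ b = 0)
    (hcomb : ∀ a b : ℝ, IsStress 2 p D (a • α + b • β))
    (hix : ∀ l, IsStress 2 p D l → (∀ w, l s(x, w) = 0) → l = 0) :
    4 ≤ (Finset.univ.filter fun w => s(x, w) ∈ D).card := by
  by_contra! hlt
  set N := Finset.univ.filter fun w => s(x, w) ∈ D with hN
  have hNo : ∀ l, IsStress 2 p D l → ∀ w, w ∉ N → l s(x, w) = 0 := by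
    intro l hl w hw
    apply hl.1
    intro h
    exact hw (by simp [hN, h])
  have hNx : ∀ w ∈ N, x ≠ w := by
    rintro w hw rfl
    exact hsimple _ (Finset.mem_filter.1 hw).2 rfl
  have hne : N.Nonempty := by
    by_contra h
    rw [Finset.not_nonempty_iff_eq_empty] at h
    have := hli 1 0 (hix _ (hcomb 1 0) (fun w => hNo _ (hcomb 1 0) w (by simp [h])))
    simp at this
  obtain ⟨c, hc⟩ := hne
  obtain ⟨l, hl, hl0, hlc⟩ : ∃ l, IsStress 2 p D l ∧ l ≠ 0 ∧ l s(x, c) = 0 := by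
    by_cases h0 : α s(x, c) = 0
    · refine ⟨_, hcomb 1 0, fun h => ?_, by simp [h0]⟩
      have := (hli 1 0 h).1
      norm_num at this
    · refine ⟨_, hcomb (β s(x, c)) (-α s(x, c)), fun h => ?_, ?_⟩
      · have := (hli _ _ h).2
        exact h0 (by linarith)
      · simp only [Pi.add_apply, Pi.smul_apply, smul_eq_mul]; ring
  apply hl0
  have hT : (N.erase c).card ≤ 2 := by
    rw [Finset.card_erase_of_mem hc]; omega
  have hTo : ∀ w, w ∉ N.erase c → l s(x, w) = 0 := by
    intro w hw
    by_cases h : w = c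
    · rw [h, hlc]
    · exact hNo l hl w (fun hm => hw (Finset.mem_erase.2 ⟨h, hm⟩))
  have hTx : ∀ w ∈ N.erase c, x ≠ w := fun w hw => hNx w (Finset.mem_of_mem_erase hw)
  have hsum : ∀ i, ∑ w ∈ N.erase c, l s(x, w) * (p x i - p w i) = 0 := by
    intro i
    rw [← ((isStress_iff _ _ _).1 hl).2 x i]
    apply Finset.sum_subset (Finset.subset_univ _)
    intro w _ hw
    rw [hTo w hw, zero_mul]
  generalize N.erase c = T at hT hTo hTx hsum
  apply hix l hl
  intro w
  by_cases hw : w ∈ T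
  swap
  · exact hTo w hw
  have hcard : T.card = 0 ∨ T.card = 1 ∨ T.card = 2 := by omega
  rcases hcard with h | h | h
  · rw [Finset.card_eq_zero] at h
    simp [h] at hw
  · obtain ⟨a, rfl⟩ := Finset.card_eq_one.1 h
    have hs := hsum 0
    rw [Finset.sum_singleton] at hs
    have hxa := point_ne hp (hTx a (by simp))
    rw [Finset.mem_singleton] at hw
    subst hw
    rcases mul_eq_zero.1 hs with h | h
    · exact h
    · exact absurd (sub_eq_zero.1 h) hxa
  · obtain ⟨a, b, hab, rfl⟩ := Finset.card_eq_two.1 h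
    have hs0 := hsum 0
    have hs1 := hsum 1
    rw [Finset.sum_pair hab] at hs0 hs1
    have hcr := cross_ne hp (hTx a (by simp)) (hTx b (by simp)) hab
    have ha : l s(x, a) = 0 := by
      apply mul_right_cancel₀ hcr
      linear_combination (-(p b 1 - p x 1)) * hs0 + (p b 0 - p x 0) * hs1
    have hb : l s(x, b) = 0 := by
      apply mul_right_cancel₀ hcr
      linear_combination (p a 1 - p x 1) * hs0 - (p a 0 - p x 0) * hs1
    simp only [Finset.mem_insert, Finset.mem_singleton] at hw
    rcases hw with rfl | rfl
    · exact ha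
    · exact hb

theorem final_step {V : Type*} [Fintype V] [DecidableEq V]
    (p : V → Fin 2 → ℝ) (hp : Generic 2 p) (D : Finset (Sym2 V))
    (hsimple : ∀ e ∈ D, ¬ e.IsDiag) (x y z : V) (hxy : x ≠ y) (hxz : x ≠ z) (hyz : y ≠ z)
    (α β : Sym2 V → ℝ)
    (hli : ∀ a b : ℝ, a • α + b • β = 0 → a = 0 ∧ b = 0)
    (hcomb : ∀ a b : ℝ, IsStress 2 p D (a • α + b • β))
    (hix : ∀ l, IsStress 2 p D l → (∀ w, l s(x, w) = 0) → l = 0)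
    (hex : ∀ e ∈ D, ∃ l, IsStress 2 p D l ∧ l e ≠ 0) (c d : ℝ) (hc0 : c ≠ 0) (hd0 : d ≠ 0)
    (hc : ∀ l, IsStress 2 p D l → ∀ w, w ≠ x → w ≠ y → l s(y, w) = c * l s(x, w))
    (hd : ∀ l, IsStress 2 p D l → ∀ w, w ≠ x → w ≠ z → l s(z, w) = d * l s(x, w)) : False := by
  have hmem : ∀ l, IsStress 2 p D l → ∀ e, l e ≠ 0 → e ∈ D := by
    intro l hl e he
    by_contra h
    exact he (hl.1 e h)
  have hdeg := degree_ge p hp D hsimple x α β hli hcomb hix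
  obtain ⟨bx, bY, bz, hb1, hb2⟩ := exists_bary hp hxy hxz hyz
  set N := (Finset.univ.filter fun w => s(x, w) ∈ D) \ {y, z} with hN
  have hNx : ∀ w ∈ N, w ≠ x ∧ w ≠ y ∧ w ≠ z := by
    intro w hw
    simp only [hN, Finset.mem_sdiff, Finset.mem_filter, Finset.mem_univ, true_and,
      Finset.mem_insert, Finset.mem_singleton, not_or] at hw
    refine ⟨?_, hw.2.1, hw.2.2⟩
    rintro rfl
    exact hsimple _ hw.1 rfl
  have hND : ∀ w ∈ N, s(x, w) ∈ D ∧ s(y, w) ∈ D ∧ s(z, w) ∈ D := by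
    intro w hw
    obtain ⟨h1, h2, h3⟩ := hNx w hw
    have hD : s(x, w) ∈ D := by
      simp only [hN, Finset.mem_sdiff, Finset.mem_filter] at hw
      exact hw.1.2
    obtain ⟨l, hl, hl0⟩ := hex _ hD
    refine ⟨hD, hmem l hl _ ?_, hmem l hl _ ?_⟩
    · rw [hc l hl w h1 h2]; exact mul_ne_zero hc0 hl0
    · rw [hd l hl w h1 h3]; exact mul_ne_zero hd0 hl0
  -- the points of `N` with nonzero weight all coincide
  have hpt : ∀ (τ : V → ℝ) l, IsStress 2 p D l →
      (∀ w ∈ N, l s(x, w) = τ w * bx w ∧ l s(y, w) = τ w * bY w ∧ l s(z, w) = τ w * bz w) →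
      ∀ w ∈ N, τ w ≠ 0 → bY w = c * bx w ∧ bz w = d * bx w ∧ (1 + c + d) * bx w = 1 := by
    intro τ l hl hv w hw hτ
    obtain ⟨h1, h2, h3⟩ := hNx w hw
    obtain ⟨v1, v2, v3⟩ := hv w hw
    have e1 := hc l hl w h1 h2
    have e2 := hd l hl w h1 h3
    rw [v1, v2] at e1
    rw [v1, v3] at e2
    have f1 : bY w = c * bx w := by
      apply mul_left_cancel₀ hτ; linarith
    have f2 : bz w = d * bx w := by
      apply mul_left_cancel₀ hτ; linarith
    refine ⟨f1, f2, ?_⟩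
    have := hb1 w
    rw [f1, f2] at this
    linarith
  have huniq : ∀ w w', (bY w = c * bx w ∧ bz w = d * bx w ∧ (1 + c + d) * bx w = 1) →
      (bY w' = c * bx w' ∧ bz w' = d * bx w' ∧ (1 + c + d) * bx w' = 1) → w = w' := by
    rintro w w' ⟨a1, a2, a3⟩ ⟨b1, b2, b3⟩
    by_contra hne
    apply point_ne hp hne
    have hs : (1 + c + d) ≠ 0 := by
      intro h; rw [h] at a3; simp at a3
    have : bx w = bx w' := by
      apply mul_left_cancel₀ hs; rw [a3, b3]
    rw [hb2 w 0, hb2 w' 0, a1, a2, b1, b2, this]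
  by_cases hD1 : s(x, y) ∈ D
  · -- triangle case
    obtain ⟨l, hl, hl0⟩ := hex _ hD1
    have ezy := hd l hl y hxy.symm hyz
    have hzy : l s(z, y) ≠ 0 := by rw [ezy]; exact mul_ne_zero hd0 hl0
    have eyz := hc l hl z hxz.symm hyz.symm
    rw [Sym2.eq_swap] at eyz
    have hxz' : l s(x, z) ≠ 0 := by
      intro h; rw [h, mul_zero] at eyz; exact hzy eyz
    have hD2 := hmem l hl _ hxz'
    have hD3 : s(y, z) ∈ D := by
      have := hmem l hl _ hzy
      rwa [Sym2.eq_swap] at this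
    have hcard : 2 ≤ N.card := by
      have h1 := Finset.le_card_sdiff ({y, z} : Finset V) (Finset.univ.filter fun w => s(x, w) ∈ D)
      have h2 : ({y, z} : Finset V).card = 2 := Finset.card_pair hyz
      rw [← hN] at h1
      omega
    obtain ⟨w, hw, w', hw', hne⟩ := Finset.one_lt_card.1 (show 1 < N.card by omega)
    obtain ⟨l, hl, hv⟩ := bary_stress p D x y z hxy hxz hyz bx bY bz hb1 hb2 N hNx hND (fun _ => 1)
      (Or.inl hD1) (Or.inl hD2) (Or.inl hD3)
    exact hne (huniq w w' (hpt _ l hl hv w hw one_ne_zero) (hpt _ l hl hv w' hw' one_ne_zero))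
  · have hD2 : s(x, z) ∉ D := by
      intro h
      obtain ⟨l, hl, hl0⟩ := hex _ h
      have eyz := hc l hl z hxz.symm hyz.symm
      have ezy := hd l hl y hxy.symm hyz
      rw [hl.1 _ hD1, mul_zero, Sym2.eq_swap, eyz] at ezy
      exact mul_ne_zero hc0 hl0 ezy
    have hNeq : N = Finset.univ.filter fun w => s(x, w) ∈ D := by
      rw [hN, Finset.sdiff_eq_self_iff_disjoint, Finset.disjoint_left]
      intro w hw hw'
      simp only [Finset.mem_insert, Finset.mem_singleton] at hw'
      have := (Finset.mem_filter.1 hw).2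
      rcases hw' with rfl | rfl
      · exact hD1 this
      · exact hD2 this
    rw [← hNeq] at hdeg
    let vv : V → Fin 3 → ℝ := fun w => ![bx w * bY w, bx w * bz w, bY w * bz w]
    have hdep : ¬ LinearIndepOn ℝ vv (N : Set V) := by
      intro h
      have h1 := LinearIndependent.fintype_card_le_finrank h
      simp at h1
      omega
    rw [linearIndepOn_finset_iff] at hdep
    push Not at hdep
    obtain ⟨τ, hτ, w, hw, hτw⟩ := hdep
    have hi : ∀ i, ∑ w ∈ N, τ w * vv w i = 0 := by
      intro i
      have := congrFun hτ i
      simpa using this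
    obtain ⟨l, hl, hv⟩ := bary_stress p D x y z hxy hxz hyz bx bY bz hb1 hb2 N hNx hND τ
      (Or.inr (hi 0)) (Or.inr (hi 1)) (Or.inr (hi 2))
    have hw1 := hpt τ l hl hv w hw hτw
    have hs := hi 0
    rw [Finset.sum_eq_single_of_mem w hw] at hs
    · obtain ⟨a1, a2, a3⟩ := hw1
      have hbx : bx w ≠ 0 := by
        intro h; rw [h, mul_zero] at a3; exact zero_ne_one a3
      have : τ w * (bx w * bY w) = 0 := hs
      rw [a1] at this
      exact mul_ne_zero hτw (mul_ne_zero hbx (mul_ne_zero hc0 hbx)) this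
    · intro w' hw' hne
      have : τ w' = 0 := by
        by_contra h
        exact hne (huniq w' w (hpt τ l hl hv w' hw' h) hw1)
      rw [this, zero_mul]

end Helpers

/-- Lemma 4.6: in the cone of a double `R_2`-circuit, the cone edges at three
technicolour vertices cannot all lie in the same part of the principal partition. -/
theorem cone_double_circuit_three_technicolour
    {V : Type*} [Fintype V] [DecidableEq V]
    (D : Finset (Sym2 V)) (hsimple : ∀ e ∈ D, ¬ e.IsDiag)
    (hcov : ∀ w : V, ∃ e ∈ D, w ∈ e)
    (p : V → Fin 2 → ℝ) (hp : Generic 2 p)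
    (q : Option V → Fin 3 → ℝ) (hq : Generic 3 q)
    (hD : IsKFoldCircuit 2 p D 2)
    (x y z : V) (hxy : x ≠ y) (hxz : x ≠ z) (hyz : y ≠ z)
    (htx : ¬ Monochromatic 2 p D 2 x) (hty : ¬ Monochromatic 2 p D 2 y)
    (htz : ¬ Monochromatic 2 p D 2 z) :
    ¬ ∃ A' : Finset (Sym2 (Option V)),
        IsPrincipalPart 3 q (coneEdges D) 2 A' ∧
        s((Option.some x : Option V), (none : Option V)) ∈ A' ∧
        s((Option.some y : Option V), (none : Option V)) ∈ A' ∧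
        s((Option.some z : Option V), (none : Option V)) ∈ A' := by
  rintro ⟨A', ⟨B, hB, hc, rfl⟩, hAx, hAy, hAz⟩
  have hnx := (Finset.mem_sdiff.1 hAx).2
  have hny := (Finset.mem_sdiff.1 hAy).2
  have hnz := (Finset.mem_sdiff.1 hAz).2
  obtain ⟨α, β, hα, hβ, hli, hspan⟩ := exists_basis p D hD.2
  have hcomb := isStress_comb p D α β hα hβ
  have hix := stress_star_injective p D x htx
  have hiy := stress_star_injective p D y hty
  have hiz := stress_star_injective p D z htz
  have hα0 : α ≠ 0 := by
    rintro rfl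
    have := (hli 1 0 (by simp)).1
    norm_num at this
  -- for every height function there is a stress vanishing on the three cone edges
  have hall : ∀ s : V → ℝ, ∃ l, IsStress 2 p D l ∧ l ≠ 0 ∧ lapForm l x s = 0 ∧
      lapForm l y s = 0 ∧ lapForm l z s = 0 := by
    intro s
    obtain ⟨t, ht⟩ := Infinite.exists_notMem_finset (Finset.univ.image fun u => - s u)
    have hst : ∀ u, s u + t ≠ 0 := by
      intro u h
      apply ht
      rw [Finset.mem_image]
      exact ⟨u, Finset.mem_univ _, by linarith⟩
    have hdep : ¬ LinearIndepOn ℝ (rigRow 3 q) (B : Set (Sym2 (Option V))) := by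
      rw [indep_iff_rrk]
      have := hc.2
      omega
    have hdep' : ¬ LinearIndepOn ℝ (rigRow 3 (coneReal p fun u => s u + t))
        (B : Set (Sym2 (Option V))) := fun h => hdep (indep_transfer hq _ B h)
    obtain ⟨ω, hω, hω0⟩ := (dep_iff_stress _ _).1 hdep'
    obtain ⟨l, hl, hl0, hlu⟩ := cone_stress p D B hB _ hst ω hω hω0
    refine ⟨l, hl, hl0, ?_, ?_, ?_⟩
    · simpa [lapForm_apply] using hlu x hnx
    · simpa [lapForm_apply] using hlu y hny
    · simpa [lapForm_apply] using hlu z hnz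
  obtain ⟨c, hc'⟩ := prop_rows p D hsimple α β hli hspan hcomb x y hix (fun s => by
    obtain ⟨l, h1, h2, h3, h4, h5⟩ := hall s
    exact ⟨l, h1, h2, h3, h4⟩)
  obtain ⟨d, hd'⟩ := prop_rows p D hsimple α β hli hspan hcomb x z hix (fun s => by
    obtain ⟨l, h1, h2, h3, h4, h5⟩ := hall s
    exact ⟨l, h1, h2, h3, h5⟩)
  have hcne : ∀ u, u ≠ x → (∀ l, IsStress 2 p D l → (∀ w, l s(u, w) = 0) → l = 0) →
      ∀ k : ℝ, (∀ l, IsStress 2 p D l → ∀ w, w ≠ x → w ≠ u → l s(u, w) = k * l s(x, w)) → k ≠ 0 := by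
    rintro u hux hiu k hk rfl
    apply hα0
    apply hiu α hα
    have hz : ∀ w, w ≠ x → α s(u, w) = 0 := by
      intro w hw
      by_cases hwu : w = u
      · subst hwu
        apply hα.1
        intro hm
        exact hsimple _ hm rfl
      · rw [hk α hα w hw hwu, zero_mul]
    intro w
    by_cases hw : w = x
    · subst hw
      have he := ((isStress_iff _ _ _).1 hα).2 u 0
      rw [Finset.sum_eq_single w (fun b _ hb => by rw [hz b hb, zero_mul]) (by simp)] at he
      rcases mul_eq_zero.1 he with h | h
      · exact h
      · exact absurd (sub_eq_zero.1 h) (point_ne hp hux)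
    · exact hz w hw
  exact final_step p hp D hsimple x y z hxy hxz hyz α β hli hcomb hix
    (fun e he => exists_stress_ne p D e he (hD.1 e he)) c d (hcne y hxy.symm hiy c hc')
    (hcne z hxz.symm hiz d hd') hc' hd'
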